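/- arXiv:2605.17715 — 3 statements merged into one kernel-verified Lean document; each statement's English description precedes it below -/
import Mathlib

section
/- Let A ∈ ℝ^{N×N}, A_h ∈ ℝ^{n×n}, B_h ∈ ℝ^{n×m}, C_h ∈ ℝ^{m×n}, and let 𝒜 = I_N ⊗ A_h + A ⊗ (B_h C_h). Then every complex eigenvalue of 𝒜 has negative real part if and only if for every complex eigenvalue λ of A, every complex eigenvalue of A_h + λ·(B_h C_h) (a complex n×n matrix) has negative real part. -/
/-!
The spectrum of `𝒜 = I ⊗ H + A ⊗ G` is the union of the spectra of `H + λ G` over `λ ∈ σ(A)`.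

If `A v = λ v` and `(H + λ G) w = μ w`, then `v ⊗ w` is an eigenvector of `𝒜` for `μ`.
Conversely, `A ⊗ I` commutes with `𝒜`, so it preserves the `μ`-eigenspace of `𝒜` and, `ℂ` being
algebraically closed, has an eigenvector `x` there, say for `λ`. Then every vector `x (·, k)`
is sent by `A` to `λ` times itself, and every `x (i, ·)` is sent by `H + λ G` to `μ` times itself;
as `x ≠ 0`, some vector of each kind is nonzero. This avoids triangularizing `A`.
-/

open Matrix Kronecker

lemma mem_spectrum_iff_exists_mulVec {ι : Type*} [Fintype ι] [DecidableEq ι]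
    (M : Matrix ι ι ℂ) (μ : ℂ) :
    μ ∈ spectrum ℂ M ↔ ∃ v : ι → ℂ, v ≠ 0 ∧ M *ᵥ v = μ • v := by
  rw [← Matrix.spectrum_toLin', ← Module.End.hasEigenvalue_iff_mem_spectrum]
  constructor
  · intro h
    obtain ⟨v, hv⟩ := h.exists_hasEigenvector
    exact ⟨v, hv.2, by simpa using hv.apply_eq_smul⟩
  · rintro ⟨v, hv, h⟩
    exact Module.End.hasEigenvalue_of_hasEigenvector
      ⟨Module.End.mem_eigenspace_iff.2 (by simpa using h), hv⟩

/-- Two commuting complex matrices share an eigenvector, with the eigenvalue of the first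
prescribed. -/
lemma exists_common_eigenvector {ι : Type*} [Fintype ι] [DecidableEq ι]
    {M T : Matrix ι ι ℂ} (h : Commute M T) {μ : ℂ} (hμ : μ ∈ spectrum ℂ M) :
    ∃ (l : ℂ) (x : ι → ℂ), x ≠ 0 ∧ M *ᵥ x = μ • x ∧ T *ᵥ x = l • x := by
  rw [mem_spectrum_iff_exists_mulVec] at hμ
  obtain ⟨v, hv, hMv⟩ := hμ
  let E := Module.End.eigenspace (Matrix.toLin' M) μ
  have hE : ∀ x, x ∈ E ↔ M *ᵥ x = μ • x := fun x => by
    simp [E]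
  have hT : ∀ x ∈ E, Matrix.toLin' T x ∈ E := fun x hx => by
    rw [hE] at hx ⊢
    rw [Matrix.toLin'_apply, Matrix.mulVec_mulVec, h.eq, ← Matrix.mulVec_mulVec, hx,
      Matrix.mulVec_smul]
  have : Nontrivial E := ⟨⟨⟨v, (hE v).2 hMv⟩, 0, fun h0 => hv (congrArg Subtype.val h0)⟩⟩
  obtain ⟨l, hl⟩ := Module.End.exists_eigenvalue ((Matrix.toLin' T).restrict hT)
  obtain ⟨x, hx⟩ := hl.exists_hasEigenvector
  refine ⟨l, x, fun h0 => hx.2 (Subtype.ext h0), (hE x).1 x.2, ?_⟩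
  simpa using congrArg Subtype.val hx.apply_eq_smul

lemma kronecker_mulVec_apply {ι κ : Type*} [Fintype ι] [Fintype κ]
    (A : Matrix ι ι ℂ) (G : Matrix κ κ ℂ) (x : ι × κ → ℂ) (i : ι) (k : κ) :
    ((A ⊗ₖ G) *ᵥ x) (i, k) = ∑ j, A i j * (G *ᵥ fun l => x (j, l)) k := by
  simp [Matrix.mulVec, dotProduct, Fintype.sum_prod_type, Finset.mul_sum, mul_assoc]

theorem mem_spectrum_one_kronecker_add_kronecker {ι κ : Type*} [Fintype ι] [DecidableEq ι]
    [Fintype κ] [DecidableEq κ] (A : Matrix ι ι ℂ) (H G : Matrix κ κ ℂ) (μ : ℂ) :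
    μ ∈ spectrum ℂ ((1 : Matrix ι ι ℂ) ⊗ₖ H + A ⊗ₖ G) ↔
      ∃ l ∈ spectrum ℂ A, μ ∈ spectrum ℂ (H + l • G) := by
  constructor
  · intro hμ
    have hcomm : Commute ((1 : Matrix ι ι ℂ) ⊗ₖ H + A ⊗ₖ G) (A ⊗ₖ (1 : Matrix κ κ ℂ)) := by
      simp [Commute, SemiconjBy, add_mul, mul_add, ← Matrix.mul_kronecker_mul]
    obtain ⟨l, x, hx, hM, hT⟩ := exists_common_eigenvector hcomm hμ
    have hred : ((1 : Matrix ι ι ℂ) ⊗ₖ (H + l • G)) *ᵥ x = μ • x := by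
      have hAG : A ⊗ₖ G = ((1 : Matrix ι ι ℂ) ⊗ₖ G) * (A ⊗ₖ (1 : Matrix κ κ ℂ)) := by
        simp [← Matrix.mul_kronecker_mul]
      rw [← hM, Matrix.kronecker_add, Matrix.add_mulVec, Matrix.add_mulVec, hAG,
        ← Matrix.mulVec_mulVec, hT, Matrix.mulVec_smul, Matrix.kronecker_smul,
        Matrix.smul_mulVec]
    obtain ⟨⟨i, k⟩, hik⟩ := Function.ne_iff.1 hx
    refine ⟨l, (mem_spectrum_iff_exists_mulVec _ _).2 ⟨fun j => x (j, k), ?_, ?_⟩,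
      (mem_spectrum_iff_exists_mulVec _ _).2 ⟨fun k' => x (i, k'), ?_, ?_⟩⟩
    · exact Function.ne_iff.2 ⟨i, hik⟩
    · ext j
      have := congrFun hT (j, k)
      rw [kronecker_mulVec_apply] at this
      simp only [Matrix.one_mulVec] at this
      exact this
    · exact Function.ne_iff.2 ⟨k, hik⟩
    · ext k'
      have := congrFun hred (i, k')
      rw [kronecker_mulVec_apply] at this
      simp only [Matrix.one_apply, ite_mul, one_mul, zero_mul, Finset.sum_ite_eq,
        Finset.mem_univ, if_true] at this
      exact this
  · rintro ⟨l, hl, hμ⟩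
    rw [mem_spectrum_iff_exists_mulVec] at hl hμ ⊢
    obtain ⟨v, hv, hAv⟩ := hl
    obtain ⟨w, hw, hHw⟩ := hμ
    obtain ⟨i, hi⟩ := Function.ne_iff.1 hv
    obtain ⟨k, hk⟩ := Function.ne_iff.1 hw
    refine ⟨fun p => v p.1 * w p.2, Function.ne_iff.2 ⟨(i, k), mul_ne_zero hi hk⟩, ?_⟩
    have hsmul : ∀ (K : Matrix κ κ ℂ) (a : ℂ) (k : κ),
        (K *ᵥ fun k' => a * w k') k = a * (K *ᵥ w) k := fun K a k =>
      congrFun (Matrix.mulVec_smul K a w) k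
    ext ⟨i, k⟩
    have h1 : ∑ j, A i j * v j = l * v i := congrFun hAv i
    have h2 : (H *ᵥ w) k + l * (G *ᵥ w) k = μ * w k := by
      have := congrFun hHw k
      rwa [Matrix.add_mulVec, Matrix.smul_mulVec] at this
    rw [Matrix.add_mulVec, Pi.add_apply, kronecker_mulVec_apply, kronecker_mulVec_apply]
    simp only [hsmul, Matrix.one_apply, ite_mul, one_mul, zero_mul, Finset.sum_ite_eq,
      Finset.mem_univ, if_true, ← mul_assoc, ← Finset.sum_mul, h1, Pi.smul_apply, smul_eq_mul]
    linear_combination v i * h2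

/-- `𝒜 = I_N ⊗ A_h + A ⊗ (B_h C_h)` is Hurwitz iff for every complex
eigenvalue `λ` of `A`, the complex matrix `A_h + λ • (B_h C_h)` is Hurwitz. -/
theorem stmt_3 (N n m : ℕ)
    (A : Matrix (Fin N) (Fin N) ℝ)
    (Ah : Matrix (Fin n) (Fin n) ℝ)
    (Bh : Matrix (Fin n) (Fin m) ℝ)
    (Ch : Matrix (Fin m) (Fin n) ℝ) :
    (∀ μ ∈ spectrum ℂ
        (((1 : Matrix (Fin N) (Fin N) ℝ) ⊗ₖ Ah + A ⊗ₖ (Bh * Ch)).map Complex.ofReal),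
        μ.re < 0)
      ↔ ∀ l ∈ spectrum ℂ (A.map Complex.ofReal),
          ∀ μ ∈ spectrum ℂ (Ah.map Complex.ofReal + l • (Bh * Ch).map Complex.ofReal),
            μ.re < 0 := by
  have hmap : ((1 : Matrix (Fin N) (Fin N) ℝ) ⊗ₖ Ah + A ⊗ₖ (Bh * Ch)).map Complex.ofReal =
      (1 : Matrix (Fin N) (Fin N) ℂ) ⊗ₖ Ah.map Complex.ofReal +
        A.map Complex.ofReal ⊗ₖ (Bh * Ch).map Complex.ofReal := by
    ext ⟨i, k⟩ ⟨j, l⟩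
    by_cases h : i = j <;> simp [h, -Matrix.map_mul]
  rw [hmap]
  simp only [mem_spectrum_one_kronecker_add_kronecker]
  exact ⟨fun h l hl μ hμ => h μ ⟨l, hl, hμ⟩, fun h μ ⟨l, hl, hμ⟩ => h l hl μ hμ⟩
end

section
/- Let A ∈ ℂ^{N×N}, B ∈ ℂ^{N×M}, A_h ∈ ℂ^{n×n}, B_h ∈ ℂ^{n×m}, C_h ∈ ℂ^{m×n}, and set 𝒜 = I_N ⊗ A_h + A ⊗ (B_h C_h) and ℬ = B ⊗ B_h. Suppose that for every μ ∈ ℂ and every nonzero z ∈ ℂ^{Nn}, zᵀ 𝒜 = μ zᵀ implies zᵀ ℬ ≠ 0. Then for every λ ∈ ℂ and every nonzero v ∈ ℂ^N, vᵀ A = λ vᵀ implies vᵀ B ≠ 0. -/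
/-!
If `v` is a left eigenvector of `A` for `l` with `vᵀ B = 0`, let `w` be a left eigenvector, for some
`μ`, of `A_h + l B_h C_h`; one exists because `ℂ` is algebraically closed and `0 < n`. By the
mixed-product rule `(v ⊗ w)ᵀ (P ⊗ Q) = (vᵀ P) ⊗ (wᵀ Q)`, the vector `v ⊗ w` is a left eigenvector of
the network matrix for `μ`, and it annihilates `B ⊗ B_h` since `vᵀ B = 0`.
-/

open Matrix Kronecker

theorem vecMul_kronecker_tensor {a b c d : ℕ} (v : Fin a → ℂ) (w : Fin b → ℂ)
    (P : Matrix (Fin a) (Fin c) ℂ) (Q : Matrix (Fin b) (Fin d) ℂ) :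
    (fun p : Fin a × Fin b => v p.1 * w p.2) ᵥ* (P ⊗ₖ Q) =
      fun p : Fin c × Fin d => (v ᵥ* P) p.1 * (w ᵥ* Q) p.2 := by
  funext p
  simp only [Matrix.vecMul, dotProduct, kroneckerMap_apply, Fintype.sum_prod_type,
    Finset.sum_mul_sum]
  exact Finset.sum_congr rfl fun i _ => Finset.sum_congr rfl fun j _ => by ring

theorem exists_left_eigenvector {n : ℕ} (hn : 0 < n) (K : Matrix (Fin n) (Fin n) ℂ) :
    ∃ (μ : ℂ) (w : Fin n → ℂ), w ≠ 0 ∧ w ᵥ* K = μ • w := by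
  have : Nonempty (Fin n) := ⟨⟨0, hn⟩⟩
  obtain ⟨μ, hμ⟩ := Module.End.exists_eigenvalue (Matrix.toLin' Kᵀ)
  obtain ⟨w, hw⟩ := hμ.exists_hasEigenvector
  refine ⟨μ, w, hw.2, ?_⟩
  have := hw.apply_eq_smul
  rwa [Matrix.toLin'_apply, Matrix.mulVec_transpose] at this

/-- controllability half of Lemma 5, PBH form: if no nonzero left
eigenvector of `𝒜 = I_N ⊗ A_h + A ⊗ (B_h C_h)` annihilates `ℬ = B ⊗ B_h`,
then no nonzero left eigenvector of `A` annihilates `B`. -/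
theorem stmt_9 (N M n m : ℕ) (hn : 0 < n)
    (A : Matrix (Fin N) (Fin N) ℂ)
    (B : Matrix (Fin N) (Fin M) ℂ)
    (Ah : Matrix (Fin n) (Fin n) ℂ)
    (Bh : Matrix (Fin n) (Fin m) ℂ)
    (Ch : Matrix (Fin m) (Fin n) ℂ)
    (h : ∀ (μ : ℂ) (z : Fin N × Fin n → ℂ), z ≠ 0 →
        z ᵥ* ((1 : Matrix (Fin N) (Fin N) ℂ) ⊗ₖ Ah + A ⊗ₖ (Bh * Ch)) = μ • z →
        z ᵥ* (B ⊗ₖ Bh) ≠ 0) :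
    ∀ (l : ℂ) (v : Fin N → ℂ), v ≠ 0 → v ᵥ* A = l • v → v ᵥ* B ≠ 0 := by
  intro l v hv hA hB
  obtain ⟨μ, w, hw, hK⟩ := exists_left_eigenvector hn (Ah + l • (Bh * Ch))
  refine h μ (fun p => v p.1 * w p.2) ?_ ?_ ?_
  · obtain ⟨i, hi⟩ := Function.ne_iff.mp hv
    obtain ⟨j, hj⟩ := Function.ne_iff.mp hw
    exact Function.ne_iff.mpr ⟨(i, j), mul_ne_zero hi hj⟩
  · rw [Matrix.vecMul_add, vecMul_kronecker_tensor, vecMul_kronecker_tensor, hA, Matrix.vecMul_one]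
    funext p
    have hp := congrFun hK p.2
    rw [Matrix.vecMul_add, Matrix.vecMul_smul] at hp
    simp only [Pi.add_apply, Pi.smul_apply, smul_eq_mul] at hp ⊢
    linear_combination v p.1 * hp
  · rw [vecMul_kronecker_tensor, hB]
    funext p
    simp
end

section
/- Let A ∈ ℂ^{N×N}, C ∈ ℂ^{M×N}, A_h ∈ ℂ^{n×n}, B_h ∈ ℂ^{n×m}, C_h ∈ ℂ^{m×n}, and set 𝒜 = I_N ⊗ A_h + A ⊗ (B_h C_h) and 𝒞 = C ⊗ C_h. Suppose that for every μ ∈ ℂ and every nonzero z ∈ ℂ^{Nn}, 𝒜 z = μ z implies 𝒞 z ≠ 0. Then for every λ ∈ ℂ and every nonzero w ∈ ℂ^N, A w = λ w implies C w ≠ 0. -/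
open Matrix Kronecker

/-! If `A w = l w` and `C w = 0` with `w ≠ 0`, then `z = w ⊗ v` contradicts the hypothesis, where `v`
is an eigenvector, with eigenvalue `μ`, of the node matrix `A_h + l B_h C_h`; such a `v` exists
because `ℂ` is algebraically closed and `n > 0`. The mixed-product rule `kronecker_mulVec_tensor`
gives `𝒜 z = w ⊗ A_h v + l w ⊗ B_h C_h v = w ⊗ (A_h + l B_h C_h) v = μ z` and
`𝒞 z = C w ⊗ C_h v = 0`. -/

/-- The mixed-product rule `(P ⊗ Q)(w ⊗ v) = P w ⊗ Q v`, where the tensor `w ⊗ v` of two vectors is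
encoded as the function `(i, j) ↦ w i * v j`. -/
lemma kronecker_mulVec_tensor {N M n m : ℕ} (P : Matrix (Fin M) (Fin N) ℂ)
    (Q : Matrix (Fin m) (Fin n) ℂ) (w : Fin N → ℂ) (v : Fin n → ℂ) :
    (P ⊗ₖ Q) *ᵥ (fun p => w p.1 * v p.2) = fun p => (P *ᵥ w) p.1 * (Q *ᵥ v) p.2 := by
  ext ⟨i, j⟩
  simp only [Matrix.mulVec, dotProduct, Matrix.kroneckerMap_apply, Fintype.sum_prod_type,
    Finset.sum_mul_sum]
  exact Finset.sum_congr rfl fun a _ => Finset.sum_congr rfl fun b _ => by ring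

/-- observability half of Lemma 5, PBH form: if no nonzero right
eigenvector of `𝒜 = I_N ⊗ A_h + A ⊗ (B_h C_h)` lies in the kernel of
`𝒞 = C ⊗ C_h`, then no nonzero right eigenvector of `A` lies in the kernel of `C`. -/
theorem stmt_11 (N M n m : ℕ) (hn : 0 < n)
    (A : Matrix (Fin N) (Fin N) ℂ)
    (C : Matrix (Fin M) (Fin N) ℂ)
    (Ah : Matrix (Fin n) (Fin n) ℂ)
    (Bh : Matrix (Fin n) (Fin m) ℂ)
    (Ch : Matrix (Fin m) (Fin n) ℂ)
    (h : ∀ (μ : ℂ) (z : Fin N × Fin n → ℂ), z ≠ 0 →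
        ((1 : Matrix (Fin N) (Fin N) ℂ) ⊗ₖ Ah + A ⊗ₖ (Bh * Ch)) *ᵥ z = μ • z →
        (C ⊗ₖ Ch) *ᵥ z ≠ 0) :
    ∀ (l : ℂ) (w : Fin N → ℂ), w ≠ 0 → A *ᵥ w = l • w → C *ᵥ w ≠ 0 := by
  intro l w hw hA hC
  haveI : Nonempty (Fin n) := ⟨⟨0, hn⟩⟩
  obtain ⟨μ, hμ⟩ := Module.End.exists_eigenvalue (Matrix.toLin' (Ah + l • (Bh * Ch)))
  obtain ⟨v, hv⟩ := hμ.exists_hasEigenvector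
  have hAv : Ah *ᵥ v + l • ((Bh * Ch) *ᵥ v) = μ • v := by
    simpa only [Matrix.toLin'_apply, Matrix.add_mulVec, Matrix.smul_mulVec] using hv.apply_eq_smul
  refine h μ (fun p => w p.1 * v p.2) ?_ ?_ ?_
  · obtain ⟨i, hi⟩ := Function.ne_iff.mp hw
    obtain ⟨j, hj⟩ := Function.ne_iff.mp hv.2
    exact Function.ne_iff.mpr ⟨(i, j), mul_ne_zero hi hj⟩
  · rw [Matrix.add_mulVec, kronecker_mulVec_tensor, kronecker_mulVec_tensor, hA, Matrix.one_mulVec]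
    ext ⟨i, j⟩
    have hj := congrFun hAv j
    simp only [Pi.add_apply, Pi.smul_apply, smul_eq_mul] at hj ⊢
    linear_combination w i * hj
  · rw [kronecker_mulVec_tensor, hC]
    ext p
    simp
end
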